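/- Let R and S be rings and let F : Mod R ⥤ C(Mod S) be an additive functor that is exact, i.e., for every short exact sequence 0 → X → Y → Z → 0 of R-modules and every j ∈ ℤ, the induced sequence 0 → F(X)^j → F(Y)^j → F(Z)^j → 0 of S-modules is exact. Let M^• be an acyclic cochain complex of R-modules (H^n(M^•) = 0 for all n) such that the associated double complex F^DC(M) is diagonally bounded-below, i.e., for every n ∈ ℤ there exists t ∈ ℤ with F(M^i)^{n−i} = 0 for all i < t. Then the total complex F^C(M^•) is acyclic. -/

import Mathlib

open CategoryTheory CategoryTheory.Limits

/-!
An exact functor preserves exactness of `M`, so the rows of the double complex are exact. Filter the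
total complex by the columns of index `< m`. If a cocycle `x` lies in step `m + 1`, its component
`y` in column `m` is killed by the horizontal differential, because this is the only contribution to
`d x` in column `m + 1`. Exactness of the rows gives `y = d z` horizontally, and `x - d z` lies in
step `m`. The filtration is exhaustive, and in each degree it vanishes far to the left, so finitely
many such corrections turn `x` into `0`.
-/

universe v

theorem le_of_inf_succ_le_sup {ι α : Type*} [LinearOrder ι] [SuccOrder ι] [IsSuccArchimedean ι]
    [CompleteLattice α] [IsModularLattice α] [IsCompactlyGenerated α]
    {f : ι → α} (hf : Monotone f) (hf_top : ⨆ m, f m = ⊤) {b z : α} (hbz : b ≤ z)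
    {t : ι} (ht : f t ≤ b) (hstep : ∀ m, z ⊓ f (Order.succ m) ≤ f m ⊔ b) : z ≤ b := by
  have inf_le (m : ι) (htm : t ≤ m) : z ⊓ f m ≤ b := by
    induction htm using Succ.rec with
    | rfl => exact inf_le_right.trans ht
    | succ m _ ih =>
      calc z ⊓ f (Order.succ m) ≤ z ⊓ (f m ⊔ b) := le_inf inf_le_left (hstep m)
        _ ≤ z ⊓ f m ⊔ b := inf_sup_le_assoc_of_le _ hbz
        _ ≤ b := sup_le ih le_rfl
  calc z = ⨆ m, z ⊓ f m := by rw [← hf.directed_le.inf_iSup_eq, hf_top, inf_top_eq]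
    _ ≤ b := iSup_le fun m =>
      (inf_le_inf_left z (hf (le_max_right t m))).trans (inf_le _ (le_max_left t m))

section TotalProjection

variable {C I₁ I₂ I₁₂ : Type*} [Category* C] [Preadditive C]
  {c₁ : ComplexShape I₁} {c₂ : ComplexShape I₂} (K : HomologicalComplex₂ C c₁ c₂)
  (c₁₂ : ComplexShape I₁₂) [TotalComplexShape c₁ c₂ c₁₂] [DecidableEq I₁₂] [K.HasTotal c₁₂]

open Classical in
/-- The projection of the total complex onto one of its summands, as a retraction of
`HomologicalComplex₂.ιTotal`. -/
noncomputable def πTotal (i₁ : I₁) (i₂ : I₂) (i₁₂ : I₁₂)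
    (h : ComplexShape.π c₁ c₂ c₁₂ (i₁, i₂) = i₁₂) :
    (K.total c₁₂).X i₁₂ ⟶ (K.X i₁).X i₂ :=
  Sigma.π (K.toGradedObject.mapObjFun (ComplexShape.π c₁ c₂ c₁₂) i₁₂) ⟨(i₁, i₂), h⟩

lemma ιTotal_πTotal (i₁ : I₁) (i₂ : I₂) (i₁₂ : I₁₂)
    (h : ComplexShape.π c₁ c₂ c₁₂ (i₁, i₂) = i₁₂) :
    K.ιTotal c₁₂ i₁ i₂ i₁₂ h ≫ πTotal K c₁₂ i₁ i₂ i₁₂ h = 𝟙 _ := by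
  classical
  exact Sigma.ι_π_eq_id (K.toGradedObject.mapObjFun (ComplexShape.π c₁ c₂ c₁₂) i₁₂) ⟨(i₁, i₂), h⟩

lemma ιTotal_πTotal_of_ne {i₁ j₁ : I₁} {i₂ j₂ : I₂} {i₁₂ : I₁₂}
    (h : ComplexShape.π c₁ c₂ c₁₂ (i₁, i₂) = i₁₂) (h' : ComplexShape.π c₁ c₂ c₁₂ (j₁, j₂) = i₁₂)
    (hne : (i₁, i₂) ≠ (j₁, j₂)) :
    K.ιTotal c₁₂ i₁ i₂ i₁₂ h ≫ πTotal K c₁₂ j₁ j₂ i₁₂ h' = 0 := by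
  classical
  exact Sigma.ι_π_of_ne (K.toGradedObject.mapObjFun (ComplexShape.π c₁ c₂ c₁₂) i₁₂)
    (b := ⟨(i₁, i₂), h⟩) (c := ⟨(j₁, j₂), h'⟩) fun heq => hne (congrArg Subtype.val heq)

end TotalProjection

section TotalDifferential

variable {C : Type*} [Category* C] [Preadditive C]
  (K : HomologicalComplex₂ C (ComplexShape.up ℤ) (ComplexShape.up ℤ))
  [K.HasTotal (ComplexShape.up ℤ)] {i j n n' : ℤ}

lemma ιTotal_d (h : i + j = n) (hn : n + 1 = n') :
    K.ιTotal (ComplexShape.up ℤ) i j n h ≫ (K.total (ComplexShape.up ℤ)).d n n' =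
      (K.d i (i + 1)).f j ≫ K.ιTotal (ComplexShape.up ℤ) (i + 1) j n'
        (show i + 1 + j = n' by lia) +
      i.negOnePow • ((K.X i).d j (j + 1) ≫ K.ιTotal (ComplexShape.up ℤ) i (j + 1) n'
        (show i + (j + 1) = n' by lia)) := by
  rw [HomologicalComplex₂.total_d, Preadditive.comp_add, K.ι_D₁, K.ι_D₂,
    K.d₁_eq (ComplexShape.up ℤ) (ComplexShape.up_mk i (i + 1) rfl) j n'
      (show i + 1 + j = n' by lia),
    K.d₂_eq (ComplexShape.up ℤ) i (ComplexShape.up_mk j (j + 1) rfl) n'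
      (show i + (j + 1) = n' by lia)]
  exact congrArg (· + _) (one_smul ℤˣ _)

lemma ιTotal_d_πTotal (h : i + j = n) (hn : n + 1 = n') :
    K.ιTotal (ComplexShape.up ℤ) i j n h ≫ (K.total (ComplexShape.up ℤ)).d n n' ≫
      πTotal K (ComplexShape.up ℤ) (i + 1) j n' (show i + 1 + j = n' by lia) =
      (K.d i (i + 1)).f j := by
  rw [← Category.assoc, ιTotal_d K h hn, Preadditive.add_comp, Category.assoc, ιTotal_πTotal,
    Category.comp_id, Linear.units_smul_comp, Category.assoc,
    ιTotal_πTotal_of_ne _ _ _ _ (by simp), comp_zero, smul_zero, add_zero]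

end TotalDifferential

section ColumnFiltration

variable {S : Type*} [Ring S]
  (K : HomologicalComplex₂ (ModuleCat.{v} S) (ComplexShape.up ℤ) (ComplexShape.up ℤ))

variable {K} in
lemma d_ιTotal_apply {i j n n' : ℤ} (h : i + j = n) (hn : n + 1 = n') (y : (K.X i).X j) :
    (K.total (ComplexShape.up ℤ)).d n n' (K.ιTotal (ComplexShape.up ℤ) i j n h y) =
      K.ιTotal (ComplexShape.up ℤ) (i + 1) j n' (show i + 1 + j = n' by lia)
        ((K.d i (i + 1)).f j y) +
      K.ιTotal (ComplexShape.up ℤ) i (j + 1) n' (show i + (j + 1) = n' by lia)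
        (i.negOnePow • (K.X i).d j (j + 1) y) := by
  rw [map_zsmul_unit]
  exact ConcreteCategory.congr_hom (ιTotal_d K h hn) y

/-- The filtration by columns of the total complex in degree `n`: step `m` is the submodule
generated by the summands `K^{i, n - i}` with `i < m`. -/
noncomputable def columnFiltration (n m : ℤ) :
    Submodule S ((K.total (ComplexShape.up ℤ)).X n) :=
  ⨆ i < m, LinearMap.range
    (K.ιTotal (ComplexShape.up ℤ) i (n - i) n (add_sub_cancel i n)).hom

variable {K}

lemma ιTotal_mem_columnFiltration {i j n m : ℤ} (h : i + j = n) (hi : i < m) (y : (K.X i).X j) :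
    K.ιTotal (ComplexShape.up ℤ) i j n h y ∈ columnFiltration K n m := by
  obtain rfl : j = n - i := by lia
  exact Submodule.mem_iSup_of_mem i (Submodule.mem_iSup_of_mem hi ⟨y, rfl⟩)

lemma columnFiltration_le_iff {n m : ℤ} {N : Submodule S ((K.total (ComplexShape.up ℤ)).X n)} :
    columnFiltration K n m ≤ N ↔ ∀ (i j : ℤ) (h : i + j = n), i < m →
      ∀ y : (K.X i).X j, K.ιTotal (ComplexShape.up ℤ) i j n h y ∈ N := by
  refine ⟨fun hN i j h hi y => hN (ιTotal_mem_columnFiltration h hi y),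
    fun hN => iSup₂_le fun i hi => ?_⟩
  rintro _ ⟨y, rfl⟩
  exact hN i (n - i) _ hi y

lemma columnFiltration_mono (n : ℤ) : Monotone (columnFiltration K n) :=
  fun _ _ hm => columnFiltration_le_iff.2 fun _ _ h hi =>
    ιTotal_mem_columnFiltration h (hi.trans_le hm)

lemma iSup_columnFiltration (n : ℤ) : ⨆ m, columnFiltration K n m = ⊤ := by
  have mkQ_eq_zero : ModuleCat.ofHom (⨆ m, columnFiltration K n m).mkQ = 0 := by
    refine HomologicalComplex₂.total.hom_ext _ fun i j h => ?_
    ext y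
    exact (Submodule.Quotient.mk_eq_zero _).2 <|
      Submodule.mem_iSup_of_mem (i + 1) (ιTotal_mem_columnFiltration h (lt_add_one i) y)
  rw [← Submodule.ker_mkQ (⨆ m, columnFiltration K n m), LinearMap.ker_eq_top]
  exact congrArg ModuleCat.Hom.hom mkQ_eq_zero

lemma columnFiltration_eq_bot {n t : ℤ} (ht : ∀ i < t, IsZero ((K.X i).X (n - i))) :
    columnFiltration K n t = ⊥ := by
  rw [eq_bot_iff, columnFiltration_le_iff]
  intro i j h hi y
  obtain rfl : j = n - i := by lia
  have := ModuleCat.subsingleton_of_isZero (ht i hi)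
  rw [Subsingleton.elim y 0, map_zero]
  exact zero_mem _

lemma columnFiltration_succ {p q n : ℤ} (h : p + q = n) :
    columnFiltration K n (p + 1) = columnFiltration K n p ⊔
      LinearMap.range (K.ιTotal (ComplexShape.up ℤ) p q n h).hom := by
  obtain rfl : q = n - p := by lia
  simp only [columnFiltration, Int.lt_add_one_iff, le_iff_lt_or_eq, iSup_or, iSup_sup_eq,
    iSup_iSup_eq_left]

lemma columnFiltration_le_comap_d {n n' : ℤ} (hn : n + 1 = n') (m : ℤ) :
    columnFiltration K n m ≤
      (columnFiltration K n' (m + 1)).comap ((K.total (ComplexShape.up ℤ)).d n n').hom := by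
  refine columnFiltration_le_iff.2 fun i j h hi y => ?_
  rw [Submodule.mem_comap, d_ιTotal_apply h hn]
  exact add_mem (ιTotal_mem_columnFiltration _ (by lia) _)
    (ιTotal_mem_columnFiltration _ (by lia) _)

lemma columnFiltration_le_ker_πTotal {n i j : ℤ} (h : i + j = n) :
    columnFiltration K n i ≤ LinearMap.ker (πTotal K (ComplexShape.up ℤ) i j n h).hom := by
  refine columnFiltration_le_iff.2 fun a b hab ha y => ?_
  exact ConcreteCategory.congr_hom
    (ιTotal_πTotal_of_ne K (ComplexShape.up ℤ) hab h (by simp [ha.ne])) y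

lemma ιTotal_f_mem_columnFiltration_sup_range_d {i j n n' : ℤ} (h : i + j = n) (hn : n + 1 = n')
    (z : (K.X i).X j) :
    K.ιTotal (ComplexShape.up ℤ) (i + 1) j n' (show i + 1 + j = n' by lia)
        ((K.d i (i + 1)).f j z) ∈
      columnFiltration K n' (i + 1) ⊔
        LinearMap.range ((K.total (ComplexShape.up ℤ)).d n n').hom := by
  rw [eq_sub_of_add_eq (d_ιTotal_apply h hn z).symm]
  exact sub_mem (Submodule.mem_sup_right ⟨_, rfl⟩)
    (Submodule.mem_sup_left (ιTotal_mem_columnFiltration _ (lt_add_one i) _))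

lemma ker_d_inf_columnFiltration_le {p q n n₀ n₁ : ℤ} (h : p + q = n) (h₀ : n₀ + 1 = n)
    (h₁ : n + 1 = n₁) (hrow : (K.flip.X q).ExactAt p) :
    LinearMap.ker ((K.total (ComplexShape.up ℤ)).d n n₁).hom ⊓ columnFiltration K n (p + 1) ≤
      columnFiltration K n p ⊔ LinearMap.range ((K.total (ComplexShape.up ℤ)).d n₀ n).hom := by
  rintro x ⟨hdx, hx⟩
  rw [columnFiltration_succ h] at hx
  obtain ⟨x', hx', _, ⟨y, rfl⟩, rfl⟩ := Submodule.mem_sup.1 hx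
  have hπx' : πTotal K (ComplexShape.up ℤ) (p + 1) q n₁ (show p + 1 + q = n₁ by lia)
      ((K.total (ComplexShape.up ℤ)).d n n₁ x') = 0 :=
    columnFiltration_le_ker_πTotal _ (columnFiltration_le_comap_d h₁ p hx')
  have hy : (K.d p (p + 1)).f q y = 0 := by
    have hdy := congrArg
      (πTotal K (ComplexShape.up ℤ) (p + 1) q n₁ (show p + 1 + q = n₁ by lia)) hdx
    rw [map_add, map_add, hπx', zero_add, map_zero] at hdy
    exact (ConcreteCategory.congr_hom (ιTotal_d_πTotal K h h₁) y).symm.trans hdy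
  obtain ⟨i, rfl⟩ : ∃ i, p = i + 1 := ⟨p - 1, by lia⟩
  obtain ⟨z, rfl⟩ : ∃ z, (K.d i (i + 1)).f q z = y := by
    rw [HomologicalComplex.exactAt_iff' _ i (i + 1) (i + 1 + 1) (by simp) (by simp),
      ShortComplex.moduleCat_exact_iff] at hrow
    exact hrow y hy
  exact add_mem (Submodule.mem_sup_left hx')
    (ιTotal_f_mem_columnFiltration_sup_range_d (show i + q = n₀ by lia) h₀ z)

end ColumnFiltration

theorem total_exactAt_of_rows_exactAt {S : Type*} [Ring S]
    (K : HomologicalComplex₂ (ModuleCat.{v} S) (ComplexShape.up ℤ) (ComplexShape.up ℤ)) (n : ℤ)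
    (hrow : ∀ p q : ℤ, p + q = n → (K.flip.X q).ExactAt p)
    (hbdd : ∃ t : ℤ, ∀ i < t, IsZero ((K.X i).X (n - i))) :
    (K.total (ComplexShape.up ℤ)).ExactAt n := by
  obtain ⟨t, ht⟩ := hbdd
  rw [HomologicalComplex.exactAt_iff' _ (n - 1) n (n + 1) (by simp) (by simp),
    ShortComplex.moduleCat_exact_iff_ker_sub_range]
  exact le_of_inf_succ_le_sup (columnFiltration_mono n) (iSup_columnFiltration n)
    (LinearMap.range_le_ker_iff.2 <| ModuleCat.hom_ext_iff.1 <|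
      (K.total (ComplexShape.up ℤ)).d_comp_d (n - 1) n (n + 1))
    ((columnFiltration_eq_bot ht).trans_le bot_le)
    fun p => ker_d_inf_columnFiltration_le (add_sub_cancel p n) (sub_add_cancel n 1) rfl
      (hrow p (n - p) (add_sub_cancel p n))

theorem extC_acyclic_of_acyclic_general {A : Type*} [Category* A] [Abelian A]
    {S : Type*} [Ring S] (F : A ⥤ CochainComplex (ModuleCat.{v} S) ℤ) [F.Additive]
    (hexact : ∀ sc : ShortComplex A, sc.ShortExact → ∀ j : ℤ,
      (sc.map (F ⋙ HomologicalComplex.eval (ModuleCat S) (ComplexShape.up ℤ) j)).ShortExact)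
    (M : CochainComplex A ℤ) (hM : ∀ n : ℤ, M.ExactAt n) (n : ℤ)
    (hbdd : ∃ t : ℤ, ∀ i < t, IsZero ((F.obj (M.X i)).X (n - i))) :
    (HomologicalComplex₂.total ((F.mapHomologicalComplex (ComplexShape.up ℤ)).obj M)
      (ComplexShape.up ℤ)).ExactAt n := by
  refine total_exactAt_of_rows_exactAt _ n (fun p q _ => ?_) hbdd
  let G := F ⋙ HomologicalComplex.eval (ModuleCat S) (ComplexShape.up ℤ) q
  have : G.PreservesHomology := (G.exact_tfae.out 0 2).1 fun sc hsc => hexact sc hsc q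
  exact (hM p).map G

/-- **Theorem 4.10(1).** Let `R` and `S` be rings and `F : Mod R ⥤ C(Mod S)` an additive
functor which is exact in the sense that it sends every short exact sequence of `R`-modules
to a degreewise short exact sequence.  If `M` is an acyclic cochain complex of `R`-modules
such that the double complex `F^{DC}(M)` (with `i`-th column `F(M^i)` and horizontal
differentials `F(d_M^i)`) is diagonally bounded-below, then the total complex
`F^C(M) = Tot(F^{DC}(M))` is acyclic. -/
theorem extC_acyclic_of_acyclic
    (R S : Type) [Ring R] [Ring S]
    (F : ModuleCat R ⥤ CochainComplex (ModuleCat S) ℤ) [F.Additive]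
    (hexact : ∀ sc : ShortComplex (ModuleCat R), sc.ShortExact →
      ∀ j : ℤ,
        (sc.map (F ⋙ HomologicalComplex.eval (ModuleCat S) (ComplexShape.up ℤ) j)).ShortExact)
    (M : CochainComplex (ModuleCat R) ℤ)
    (hM : ∀ n : ℤ, M.ExactAt n)
    (hbdd : ∀ n : ℤ, ∃ t : ℤ, ∀ i : ℤ, i < t → IsZero ((F.obj (M.X i)).X (n - i))) :
    ∀ n : ℤ,
      (HomologicalComplex₂.total ((F.mapHomologicalComplex (ComplexShape.up ℤ)).obj M)
        (ComplexShape.up ℤ)).ExactAt n :=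
  fun n => extC_acyclic_of_acyclic_general F hexact M hM n (hbdd n)
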